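/- Let P ⊆ ℝ^d be a d-dimensional simplicial reflexive polytope, F a facet of P and v ∈ 𝒱(F). Then for every x ∈ P one has ⟨u_F, x⟩ − 1 ≤ ⟨u_F^v, x⟩, and if equality holds then x lies on the neighboring facet N(F,v). -/

import Mathlib

noncomputable section

/-- The standard inner product on `ℝ^d`. -/
def dotp {d : ℕ} (x y : Fin d → ℝ) : ℝ := ∑ i, x i * y i

/-- `x` is a point of the lattice `ℤ^d`. -/
def IsLP {d : ℕ} (x : Fin d → ℝ) : Prop := ∀ i, ∃ n : ℤ, x i = (n : ℝ)

/-- A lattice polytope: convex hull of finitely many lattice points. -/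
def IsLatticePolytope {d : ℕ} (P : Set (Fin d → ℝ)) : Prop :=
  ∃ V : Finset (Fin d → ℝ), (∀ v ∈ V, IsLP v) ∧ P = convexHull ℝ (V : Set (Fin d → ℝ))

/-- The dual polytope `P* = {x | ⟨x,y⟩ ≤ 1 ∀ y ∈ P}`. -/
def dualPolytope {d : ℕ} (P : Set (Fin d → ℝ)) : Set (Fin d → ℝ) :=
  {x | ∀ y ∈ P, dotp x y ≤ 1}

/-- `P` is a reflexive polytope: a (`d`-dimensional) lattice polytope with `0` in its
interior whose dual is again a lattice polytope. -/
def IsReflexive {d : ℕ} (P : Set (Fin d → ℝ)) : Prop :=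
  IsLatticePolytope P ∧ (0 : Fin d → ℝ) ∈ interior P ∧ IsLatticePolytope (dualPolytope P)

/-- `F` is a facet of `P` with (uniquely determined) outer normal `u`, normalized by
`⟨u, F⟩ = 1` (possible since `0` is in the interior of `P`). -/
def IsFacetNormal {d : ℕ} (P F : Set (Fin d → ℝ)) (u : Fin d → ℝ) : Prop :=
  F.Nonempty ∧ (∀ y ∈ P, dotp u y ≤ 1) ∧ F = {y ∈ P | dotp u y = 1} ∧
    Module.finrank ℝ (vectorSpan ℝ F) = d - 1

/-- `F` is a facet of `P`. -/
def IsFacet {d : ℕ} (P F : Set (Fin d → ℝ)) : Prop := ∃ u, IsFacetNormal P F u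

/-- `P` is simplicial: every facet has exactly `d` vertices. -/
def IsSimplicial {d : ℕ} (P : Set (Fin d → ℝ)) : Prop :=
  ∀ F, IsFacet P F → (Set.extremePoints ℝ F).ncard = d


theorem dotp_add_left {d : ℕ} (a b y : Fin d → ℝ) : dotp (a + b) y = dotp a y + dotp b y := by
  simp [dotp, add_mul, Finset.sum_add_distrib]

theorem dotp_smul_left {d : ℕ} (c : ℝ) (a y : Fin d → ℝ) : dotp (c • a) y = c * dotp a y := by
  simp [dotp, Finset.mul_sum, mul_assoc]

theorem dotp_sub_left {d : ℕ} (a b y : Fin d → ℝ) : dotp (a - b) y = dotp a y - dotp b y := by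
  simp [dotp, sub_mul, Finset.sum_sub_distrib]

/-- The pairing as a linear functional. -/
def dotl {d : ℕ} (a : Fin d → ℝ) : (Fin d → ℝ) →ₗ[ℝ] ℝ where
  toFun y := dotp a y
  map_add' x y := by simp [dotp, mul_add, Finset.sum_add_distrib]
  map_smul' c x := by simp [dotp, Finset.mul_sum, mul_left_comm]

theorem dotl_apply {d : ℕ} (a y : Fin d → ℝ) : dotl a y = dotp a y := rfl

theorem eq_zero_of_facet {d : ℕ} {P F : Set (Fin d → ℝ)} {u f : Fin d → ℝ} (hd : 0 < d)
    (hF : IsFacetNormal P F u) (hf : ∀ y ∈ F, dotp f y = 0) : f = 0 := by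
  obtain ⟨⟨y0, hy0⟩, -, hFe, hr⟩ := hF
  have hu : ∀ y ∈ F, dotp u y = 1 := fun y hy => by rw [hFe] at hy; exact hy.2
  have h1 : vectorSpan ℝ F ≤ LinearMap.ker (dotl f) := by
    rw [vectorSpan_def, Submodule.span_le]
    rintro _ ⟨a, ha, b, hb, rfl⟩
    change dotl f (a - b) = 0
    rw [map_sub, dotl_apply, dotl_apply, hf a ha, hf b hb, sub_self]
  have h2 : vectorSpan ℝ F ≤ LinearMap.ker (dotl u) := by
    rw [vectorSpan_def, Submodule.span_le]
    rintro _ ⟨a, ha, b, hb, rfl⟩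
    change dotl u (a - b) = 0
    rw [map_sub, dotl_apply, dotl_apply, hu a ha, hu b hb, sub_self]
  have h3 : vectorSpan ℝ F < LinearMap.ker (dotl f) := by
    refine lt_of_le_of_ne h1 fun h => ?_
    have : y0 ∈ LinearMap.ker (dotl f) := by simp [dotl_apply, hf y0 hy0]
    rw [← h] at this
    have := h2 this
    simp [dotl_apply, hu y0 hy0] at this
  have h4 := Submodule.finrank_lt_finrank_of_lt h3
  have h5 : LinearMap.ker (dotl f) = ⊤ := by
    apply Submodule.eq_top_of_finrank_eq
    have := Submodule.finrank_le (LinearMap.ker (dotl f))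
    simp only [Module.finrank_fin_fun] at this ⊢
    omega
  funext i
  have : Pi.single i (1 : ℝ) ∈ LinearMap.ker (dotl f) := by rw [h5]; trivial
  simpa [dotl_apply, dotp, Pi.single_apply] using this

theorem eq_zero_of_ext {d : ℕ} {P F : Set (Fin d → ℝ)} {u f : Fin d → ℝ} (hd : 0 < d)
    (hP : IsLatticePolytope P) (hF : IsFacetNormal P F u)
    (hf : ∀ y ∈ Set.extremePoints ℝ F, dotp f y = 0) : f = 0 := by
  apply eq_zero_of_facet hd hF
  obtain ⟨V, -, rfl⟩ := hP
  have hc : IsCompact (convexHull ℝ (V : Set (Fin d → ℝ))) := V.finite_toSet.isCompact_convexHull ℝ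
  have hcont : ∀ a : Fin d → ℝ, Continuous (dotl a) := fun a => (dotl a).continuous_of_finiteDimensional
  obtain ⟨-, -, hFe, -⟩ := hF
  have hFe' : F = convexHull ℝ (V : Set (Fin d → ℝ)) ∩ {y | dotl u y = 1} := hFe
  have hFc : IsCompact F := by
    rw [hFe']
    exact hc.inter_right (isClosed_eq (hcont u) continuous_const)
  have hFx : Convex ℝ F := by
    rw [hFe']
    exact (convex_convexHull ℝ _).inter (convex_hyperplane (dotl u).isLinear 1)
  have key := closure_convexHull_extremePoints hFc hFx
  have : closure (convexHull ℝ (Set.extremePoints ℝ F)) ⊆ {y | dotl f y = 0} := by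
    apply closure_minimal _ (isClosed_eq (hcont f) continuous_const)
    exact convexHull_min hf (convex_hyperplane (dotl f).isLinear 0)
  rw [key] at this
  exact this

theorem normal_isLP {d : ℕ} {P F : Set (Fin d → ℝ)} {u : Fin d → ℝ} (hd : 0 < d)
    (hP : IsLatticePolytope (dualPolytope P)) (hF : IsFacetNormal P F u) : IsLP u := by
  obtain ⟨W, hW, hWe⟩ := hP
  apply hW
  have : u ∈ Set.extremePoints ℝ (dualPolytope P) := by
    refine ⟨hF.2.1, ?_⟩
    rintro p hp q hq ⟨a, b, ha, hb, hab, hpq⟩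
    have : p - u = 0 := by
      apply eq_zero_of_facet hd hF
      intro y hy
      have hy' := hy
      rw [hF.2.2.1] at hy'
      have h1 := hp y hy'.1
      have h2 := hq y hy'.1
      have h3 := hy'.2
      have h4 : a * dotp p y + b * dotp q y = 1 := by
        rw [← dotp_smul_left, ← dotp_smul_left, ← dotp_add_left, hpq, h3]
      rw [dotp_sub_left, h3]
      have hb' : b = 1 - a := by linarith
      subst hb'
      nlinarith
    exact sub_eq_zero.1 this
  rw [hWe] at this
  exact_mod_cast extremePoints_convexHull_subset this

theorem vertex_isLP {d : ℕ} {P F : Set (Fin d → ℝ)} {u v : Fin d → ℝ}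
    (hP : IsLatticePolytope P) (hF : IsFacetNormal P F u) (hv : v ∈ Set.extremePoints ℝ F) :
    IsLP v := by
  obtain ⟨V, hV, hVe⟩ := hP
  apply hV
  obtain ⟨-, hle, hFe, -⟩ := hF
  have : v ∈ Set.extremePoints ℝ P := by
    have hvF := hv.1
    rw [hFe] at hvF
    refine ⟨hvF.1, ?_⟩
    intro p hp q hq hpq
    have hpq' := hpq
    obtain ⟨a, b, ha, hb, hab, hpq⟩ := hpq
    have h1 := hle p hp
    have h2 := hle q hq
    have h4 : a * dotp u p + b * dotp u q = 1 := by
      have := congrArg (dotl u) hpq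
      rw [map_add, map_smul, map_smul, dotl_apply, dotl_apply, dotl_apply, hvF.2] at this
      exact this
    have hb' : b = 1 - a := by linarith
    subst hb'
    have hpF : p ∈ F := by rw [hFe]; exact ⟨hp, by nlinarith⟩
    have hqF : q ∈ F := by rw [hFe]; exact ⟨hq, by nlinarith⟩
    exact hv.2 hpF hqF hpq'
  rw [hVe] at this
  exact_mod_cast extremePoints_convexHull_subset this

theorem dotp_int {d : ℕ} {x y : Fin d → ℝ} (hx : IsLP x) (hy : IsLP y) :
    ∃ n : ℤ, dotp x y = n := by
  choose f hf using hx
  choose g hg using hy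
  exact ⟨∑ i, f i * g i, by simp [dotp, hf, hg]⟩

/-- for a facet `F` of a simplicial reflexive polytope and a vertex `v` of `F`:
`⟨u_F, x⟩ - 1 ≤ ⟨u_F^v, x⟩` for all `x ∈ P`, with equality only for `x` on the neighboring
facet `N(F,v)`. -/
theorem stmt8 {d : ℕ} (P : Set (Fin d → ℝ)) (hP : IsReflexive P) (hs : IsSimplicial P)
    (F F' : Set (Fin d → ℝ)) (u u' : Fin d → ℝ)
    (hF : IsFacetNormal P F u) (hF' : IsFacetNormal P F' u')
    (v : Fin d → ℝ) (hv : v ∈ Set.extremePoints ℝ F)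
    (hne : F' ≠ F) (hsub : Set.extremePoints ℝ F \ {v} ⊆ F')
    (uv : Fin d → ℝ) (huv1 : dotp uv v = 1)
    (huv0 : ∀ w ∈ Set.extremePoints ℝ F, w ≠ v → dotp uv w = 0) :
    ∀ x ∈ P, dotp u x - 1 ≤ dotp uv x ∧ (dotp u x - 1 = dotp uv x → x ∈ F') := by
  have hd : 0 < d := by
    rcases Nat.eq_zero_or_pos d with rfl | h
    · simp [dotp] at huv1
    · exact h
  obtain ⟨n, hn⟩ := dotp_int (normal_isLP hd hP.2.2 hF') (vertex_isLP hP.1 hF hv)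
  have huF : ∀ y ∈ F, dotp u y = 1 := fun y hy => by
    rw [hF.2.2.1] at hy; exact hy.2
  have huF' : ∀ y ∈ F', dotp u' y = 1 := fun y hy => by
    rw [hF'.2.2.1] at hy; exact hy.2
  have hvP : v ∈ P := by
    have h := hv.1
    rw [hF.2.2.1] at h
    exact h.1
  have hz : (u' - u) - ((n : ℝ) - 1) • uv = 0 := by
    apply eq_zero_of_ext hd hP.1 hF
    intro w hw
    rw [dotp_sub_left, dotp_sub_left, dotp_smul_left, huF w hw.1]
    by_cases hwv : w = v
    · subst hwv
      rw [hn, huv1]; ring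
    · rw [huF' w (hsub ⟨hw, hwv⟩), huv0 w hw hwv]; ring
  have hx' : ∀ x, dotp u' x = dotp u x + ((n : ℝ) - 1) * dotp uv x := by
    intro x
    have h : dotp ((u' - u) - ((n : ℝ) - 1) • uv) x = 0 := by rw [hz]; simp [dotp]
    rw [dotp_sub_left, dotp_sub_left, dotp_smul_left] at h
    linarith
  have hn1 : n ≤ 1 := by
    have := hF'.2.1 v hvP
    rw [hn] at this
    exact_mod_cast this
  have hn2 : n ≠ 1 := by
    rintro rfl
    apply hne
    have : u' = u := by
      have := hz
      simp at this
      exact sub_eq_zero.1 this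
    rw [hF.2.2.1, hF'.2.2.1, this]
  have hn0 : (n : ℝ) ≤ 0 := by
    have : n ≤ 0 := by omega
    exact_mod_cast this
  intro x hx
  have e1 := hF.2.1 x hx
  have e2 := hF'.2.1 x hx
  have e3 := hx' x
  have hle : dotp u x - 1 ≤ dotp uv x := by
    rcases le_total 0 (dotp uv x) with h | h
    · linarith
    · nlinarith
  refine ⟨hle, fun heq => ?_⟩
  rw [hF'.2.2.1]
  refine ⟨hx, ?_⟩
  have h : dotp uv x ≤ 0 := by linarith
  apply le_antisymm e2
  nlinarith
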